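/- For every integer s ≥ 1 there exists a constant c > 0, depending only on s, such that for every 2π-periodic function g : ℝ → ℂ of class C^s, every even integer N ≥ 2 (with h = 2π/N), and every grid index i ∈ {−N/2+1, …, N/2}, the alternate-point trapezoidal rule satisfies |2h Σ_{j=−N/2+1, (j−i) odd}^{N/2} g(α_j) − ∫_{−π}^{π} g(α) dα| ≤ c h^s ‖g‖_s, where the sum is over those j ∈ {−N/2+1, …, N/2} for which j − i is odd. -/

import Mathlib

open scoped BigOperators
open Finset

noncomputable section

/-- Grid spacing `h = 2π/N`. -/
def hgrid (N : ℤ) : ℝ := 2 * Real.pi / N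

/-- Grid points `α_j = j h`. -/
def gridPt (N : ℤ) (j : ℤ) : ℝ := j * hgrid N

/-- Index set `{-N/2+1, …, N/2}`. -/
def idxs (N : ℤ) : Finset ℤ := Finset.Icc (-(N / 2) + 1) (N / 2)

/-- Discrete Fourier coefficient `f̂_k`. -/
def dft (N : ℤ) (f : ℤ → ℂ) (k : ℤ) : ℂ :=
  (N : ℂ)⁻¹ * ∑ j ∈ idxs N, f j * Complex.exp (-(Complex.I * (k : ℂ) * (gridPt N j : ℂ)))

/-- Reconstruction of a discrete function from Fourier coefficients. -/
def idft (N : ℤ) (c : ℤ → ℂ) (j : ℤ) : ℂ :=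
  ∑ k ∈ idxs N, c k * Complex.exp (Complex.I * (k : ℂ) * (gridPt N j : ℂ))

/-- The pseudo-spectral derivative `S_h`. -/
def Sh (N : ℤ) (f : ℤ → ℂ) : ℤ → ℂ :=
  idft N fun k => if k = N / 2 then 0 else Complex.I * (k : ℂ) * dft N f k

/-- The pseudo-spectral antiderivative `S_h⁻¹`. -/
def Shinv (N : ℤ) (f : ℤ → ℂ) : ℤ → ℂ :=
  idft N fun k => if k = 0 then 0 else dft N f k / (Complex.I * (k : ℂ))

/-- The filtered discrete function `f^p`. -/
def filterP (N : ℤ) (ρ : ℝ → ℝ) (f : ℤ → ℂ) : ℤ → ℂ :=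
  idft N fun k => (ρ (gridPt N k) : ℂ) * dft N f k

/-- The filtered derivative `D_h`. -/
def Dh (N : ℤ) (ρ : ℝ → ℝ) (f : ℤ → ℂ) : ℤ → ℂ :=
  idft N fun k => Complex.I * (k : ℂ) * (ρ (gridPt N k) : ℂ) * dft N f k

/-- Discrete `l²` norm. -/
def l2norm (N : ℤ) (f : ℤ → ℂ) : ℝ :=
  Real.sqrt (hgrid N * ∑ j ∈ idxs N, norm (f j) ^ 2)

/-- Discrete Hilbert transform `H_h`. -/
def Hh (N : ℤ) (f : ℤ → ℂ) (i : ℤ) : ℂ :=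
  ((hgrid N / Real.pi : ℝ) : ℂ) *
    ∑ j ∈ (idxs N).filter (fun j => Odd (j - i)),
      f j * (Real.cot ((gridPt N i - gridPt N j) / 2) : ℂ)

/-- Discrete inner product `(f,g)_h`. -/
def dip (N : ℤ) (f g : ℤ → ℂ) : ℂ :=
  (hgrid N : ℂ) * ∑ j ∈ idxs N, (starRingEnd ℂ) (f j) * g j

/-- Discrete mean `⟨f⟩_h`. -/
def dmean (N : ℤ) (f : ℤ → ℂ) : ℂ :=
  (N : ℂ)⁻¹ * ∑ j ∈ idxs N, f j

/-- The discrete function of samples of a periodic function. -/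
def samples (N : ℤ) (f : ℝ → ℂ) : ℤ → ℂ := fun j => f (gridPt N j)

/-- Fourier coefficient of a `2π`-periodic function. -/
def fourierCoeffP (f : ℝ → ℂ) (k : ℤ) : ℂ :=
  ((2 * Real.pi)⁻¹ : ℝ) * ∫ α in (-Real.pi)..Real.pi, f α * Complex.exp (-(Complex.I * (k : ℂ) * (α : ℂ)))

/-- Sobolev norm `‖f‖_s`. -/
def sobolevNorm (s : ℕ) (f : ℝ → ℂ) : ℝ :=
  Real.sqrt (∑' k : ℤ, (1 + (k : ℝ) ^ 2) ^ s * norm (fourierCoeffP f k) ^ 2)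

/-- A filter (cutoff) function for numerical filtering. -/
structure IsFilter (ρ : ℝ → ℝ) : Prop where
  even : ∀ x, ρ (-x) = ρ x
  nonneg : ∀ x, 0 ≤ ρ x
  smooth : ∃ r : ℕ, 2 < r ∧ ContDiff ℝ r ρ
  zero_at_pi : ρ Real.pi = 0
  zero_at_neg_pi : ρ (-Real.pi) = 0
  deriv_zero_at_pi : deriv ρ Real.pi = 0
  deriv_zero_at_neg_pi : deriv ρ (-Real.pi) = 0
  one_near_zero : ∃ μ : ℝ, 0 < μ ∧ μ < 1 ∧ ∀ x : ℝ, |x| ≤ μ * Real.pi → ρ x = 1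

/-!
The points `α_j` with `j - i` odd are `M = N / 2` equispaced points of the circle, that is, a
translate of the orbit of an element `u` of additive order `M`. Averaging over such an orbit
annihilates every character whose frequency is not a multiple of `M`, so the quadrature error is
`2π` times the sum of the aliased terms `ĝ (m M) exp (i m M x)`, `m ≠ 0`. By Cauchy-Schwarz,
`∑ |ĝ (m M)| ≤ (∑ |m| ^ (-2s)) ^ (1/2) (∑ |m| ^ (2s) |ĝ (m M)|²) ^ (1/2)`, and the second factor is
at most `M ^ (-s) ‖g‖_s`. The series `∑ |m| ^ (-2s)` converges for `s > 1/2`, and `‖g‖_s < ∞` for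
`g ∈ C^s`, since differentiation multiplies the `k`-th coefficient by `ik`.
-/

section SobolevSequences

variable {E : Type*} [SeminormedAddCommGroup E] {s : ℝ} {a : ℤ → E}

/-- `∑ (1 + k²)^s ‖a k‖² < ∞`: the condition on the Fourier coefficients of a function which puts
it in the Sobolev space `H^s`, for a real order `s`. -/
def SobolevSummable (s : ℝ) (a : ℤ → E) : Prop :=
  Summable fun k : ℤ => (1 + (k : ℝ) ^ 2) ^ s * ‖a k‖ ^ 2

/-- The `H^s` norm of a function with Fourier coefficients `a`, for a real order `s`; it is `0`
unless `SobolevSummable s a`. -/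
def sobolevSeqNorm (s : ℝ) (a : ℤ → E) : ℝ :=
  √(∑' k : ℤ, (1 + (k : ℝ) ^ 2) ^ s * ‖a k‖ ^ 2)

/-- The constant `√(2 ζ(2s))` of the Cauchy-Schwarz estimate for aliased coefficients. The term
`m = 0` vanishes, as `0 ^ (-(2 * s)) = 0` for `s ≠ 0`. -/
def aliasingConst (s : ℝ) : ℝ :=
  √(∑' m : ℤ, |(m : ℝ)| ^ (-(2 * s)))

theorem sobolevNorm_eq_sobolevSeqNorm (n : ℕ) (f : ℝ → ℂ) :
    sobolevNorm n f = sobolevSeqNorm n (fourierCoeffP f) := by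
  simp only [sobolevNorm, sobolevSeqNorm, Real.rpow_natCast]

theorem summable_abs_rpow_neg_two_mul (hs : 1 / 2 < s) :
    Summable fun m : ℤ => |(m : ℝ)| ^ (-(2 * s)) :=
  Real.summable_abs_int_rpow (by linarith)

theorem aliasingConst_pos (hs : 1 / 2 < s) : 0 < aliasingConst s :=
  Real.sqrt_pos.mpr <| (summable_abs_rpow_neg_two_mul hs).tsum_pos (fun _ => by positivity) 1
    (by simp)

theorem summable_and_tsum_mul_le_sqrt_mul_sqrt {ι : Type*} {u v : ι → ℝ} (hu : ∀ i, 0 ≤ u i)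
    (hv : ∀ i, 0 ≤ v i) (hu2 : Summable fun i => u i ^ 2) (hv2 : Summable fun i => v i ^ 2) :
    (Summable fun i => u i * v i) ∧
      ∑' i, u i * v i ≤ √(∑' i, u i ^ 2) * √(∑' i, v i ^ 2) := by
  simpa [Real.sqrt_eq_rpow] using
    Real.summable_and_inner_le_Lp_mul_Lq_tsum_of_nonneg Real.HolderConjugate.two_two hu hv
      (by simpa using hu2) (by simpa using hv2)

theorem summable_and_tsum_norm_off_zero_le (hs : 1 / 2 < s)
    (ha : Summable fun m : ℤ => (|(m : ℝ)| ^ s * ‖a m‖) ^ 2) :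
    (Summable fun m : ℤ => if m = 0 then 0 else ‖a m‖) ∧
      ∑' m : ℤ, (if m = 0 then 0 else ‖a m‖) ≤
        aliasingConst s * √(∑' m : ℤ, (|(m : ℝ)| ^ s * ‖a m‖) ^ 2) := by
  have hsplit (m : ℤ) : (if m = 0 then 0 else ‖a m‖) =
      |(m : ℝ)| ^ (-s) * (|(m : ℝ)| ^ s * ‖a m‖) := by
    split_ifs with hm
    · simp [hm, Real.zero_rpow (by linarith : -s ≠ 0)]
    · rw [← mul_assoc, ← Real.rpow_add (by simpa), neg_add_cancel, Real.rpow_zero, one_mul]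
  have hsq (m : ℤ) : (|(m : ℝ)| ^ (-s)) ^ 2 = |(m : ℝ)| ^ (-(2 * s)) := by
    rw [← Real.rpow_mul_natCast (abs_nonneg _), neg_mul, Nat.cast_ofNat, mul_comm]
  have hcs := summable_and_tsum_mul_le_sqrt_mul_sqrt (u := fun m : ℤ => |(m : ℝ)| ^ (-s))
    (fun _ => by positivity) (fun _ => by positivity)
    (by simpa only [hsq] using summable_abs_rpow_neg_two_mul hs) ha
  simpa only [hsplit, hsq, aliasingConst] using hcs

theorem sq_rpow_mul_norm_mul_natCast_le (hs : 0 ≤ s) (a : ℤ → E) {M : ℕ} (hM : M ≠ 0) (m : ℤ) :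
    (|(m : ℝ)| ^ s * ‖a (m * M)‖) ^ 2 ≤
      ((M : ℝ) ^ (-s)) ^ 2 * ((1 + ((m * M : ℤ) : ℝ) ^ 2) ^ s * ‖a (m * M)‖ ^ 2) := by
  have hm : |(m : ℝ)| ^ s = (M : ℝ) ^ (-s) * |((m * M : ℤ) : ℝ)| ^ s := by
    rw [Int.cast_mul, abs_mul, Int.cast_natCast, Nat.abs_cast,
      Real.mul_rpow (by positivity) (by positivity), Real.rpow_neg (by positivity)]
    field_simp
  have hweight : (|((m * M : ℤ) : ℝ)| ^ s) ^ 2 ≤ (1 + ((m * M : ℤ) : ℝ) ^ 2) ^ s := by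
    rw [Real.rpow_pow_comm (abs_nonneg _), sq_abs]
    gcongr
    linarith
  rw [hm, mul_assoc, mul_pow, mul_pow]
  gcongr

theorem SobolevSummable.summable_and_tsum_sq_mul_natCast_le (hs : 0 ≤ s)
    (ha : SobolevSummable s a) {M : ℕ} (hM : M ≠ 0) :
    (Summable fun m : ℤ => (|(m : ℝ)| ^ s * ‖a (m * M)‖) ^ 2) ∧
      √(∑' m : ℤ, (|(m : ℝ)| ^ s * ‖a (m * M)‖) ^ 2) ≤ (M : ℝ) ^ (-s) * sobolevSeqNorm s a := by
  have hinj : Function.Injective fun m : ℤ => m * (M : ℤ) := mul_left_injective₀ (by simpa)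
  have hdom := (ha.comp_injective hinj).mul_left (((M : ℝ) ^ (-s)) ^ 2)
  have hle := sq_rpow_mul_norm_mul_natCast_le hs a hM
  have hsum : Summable fun m : ℤ => (|(m : ℝ)| ^ s * ‖a (m * M)‖) ^ 2 :=
    hdom.of_nonneg_of_le (fun _ => by positivity) hle
  refine ⟨hsum, ?_⟩
  rw [sobolevSeqNorm, ← Real.sqrt_sq (by positivity : 0 ≤ (M : ℝ) ^ (-s)),
    ← Real.sqrt_mul (by positivity)]
  refine Real.sqrt_le_sqrt ((hsum.tsum_le_tsum hle hdom).trans ?_)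
  rw [tsum_mul_left]
  exact mul_le_mul_of_nonneg_left (tsum_comp_le_tsum_of_inj ha (fun _ => by positivity) hinj)
    (sq_nonneg _)

theorem SobolevSummable.summable_and_tsum_norm_mul_natCast_le (hs : 1 / 2 < s)
    (ha : SobolevSummable s a) {M : ℕ} (hM : M ≠ 0) :
    (Summable fun m : ℤ => if m = 0 then 0 else ‖a (m * M)‖) ∧
      ∑' m : ℤ, (if m = 0 then 0 else ‖a (m * M)‖) ≤
        aliasingConst s * (M : ℝ) ^ (-s) * sobolevSeqNorm s a := by
  obtain ⟨hsq, hsq_le⟩ := ha.summable_and_tsum_sq_mul_natCast_le (by linarith) hM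
  obtain ⟨hsum, hsum_le⟩ := summable_and_tsum_norm_off_zero_le hs hsq
  refine ⟨hsum, hsum_le.trans ?_⟩
  rw [mul_assoc]
  exact mul_le_mul_of_nonneg_left hsq_le (Real.sqrt_nonneg _)

theorem SobolevSummable.summable [CompleteSpace E] (hs : 1 / 2 < s) (ha : SobolevSummable s a) :
    Summable a := by
  refine .of_norm_bounded_eventually
    (ha.summable_and_tsum_norm_mul_natCast_le hs one_ne_zero).1 ?_
  filter_upwards [(Set.finite_singleton (0 : ℤ)).compl_mem_cofinite] with k hk
  simp_all

end SobolevSequences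

section EquispacedAverages

open AddCircle

variable {T : ℝ}

theorem fourier_add_nsmul (k : ℤ) (x u : AddCircle T) (l : ℕ) :
    fourier k (x + l • u) = fourier k x * fourier k u ^ l := by
  simp only [fourier_apply, smul_add, toCircle_add, smul_comm k l, toCircle_nsmul,
    Circle.coe_mul, Circle.coe_pow]

variable [hT : Fact (0 < T)] {u : AddCircle T}

theorem fourier_eq_one_iff (k : ℤ) (u : AddCircle T) :
    fourier k u = 1 ↔ (addOrderOf u : ℤ) ∣ k := by
  rw [fourier_apply, Circle.coe_eq_one, ← toCircle_zero,
    (injective_toCircle hT.out.ne').eq_iff, addOrderOf_dvd_iff_zsmul_eq_zero]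

theorem sum_fourier_add_nsmul (k : ℤ) (x u : AddCircle T) :
    ∑ l ∈ range (addOrderOf u), fourier k (x + l • u) =
      if (addOrderOf u : ℤ) ∣ k then (addOrderOf u : ℂ) * fourier k x else 0 := by
  simp only [fourier_add_nsmul, ← mul_sum]
  split_ifs with hk
  · simp [(fourier_eq_one_iff k u).mpr hk, mul_comm]
  · have hpow : fourier k u ^ addOrderOf u = 1 := by
      simpa [addOrderOf_nsmul_eq_zero] using (fourier_add_nsmul k 0 u (addOrderOf u)).symm
    rw [geom_sum_eq (mt (fourier_eq_one_iff k u).mp hk), hpow, sub_self, zero_div, mul_zero]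

theorem hasSum_aliased_fourierCoeff {f : C(AddCircle T, ℂ)} (hf : Summable (fourierCoeff f))
    (hu : IsOfFinAddOrder u) (x : AddCircle T) :
    HasSum (fun m : ℤ => fourierCoeff f (m * addOrderOf u) * fourier (m * addOrderOf u) x)
      ((addOrderOf u : ℂ)⁻¹ * ∑ l ∈ range (addOrderOf u), f (x + l • u)) := by
  have hn : addOrderOf u ≠ 0 := hu.addOrderOf_pos.ne'
  have hinj : Function.Injective fun m : ℤ => m * (addOrderOf u : ℤ) :=
    mul_left_injective₀ (by simpa)
  have hfull := (hasSum_sum (s := range (addOrderOf u)) fun l _ =>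
    has_pointwise_sum_fourier_series_of_summable hf (x + l • u)).mul_left (addOrderOf u : ℂ)⁻¹
  simp only [smul_eq_mul, ← mul_sum, sum_fourier_add_nsmul] at hfull
  have halias := (hinj.hasSum_iff fun k hk => ?_).mpr hfull
  · refine halias.congr_fun fun m => ?_
    rw [Function.comp_apply, if_pos (dvd_mul_left _ _)]
    field_simp
  · rw [if_neg fun ⟨m, hm⟩ => hk ⟨m, by rw [hm, mul_comm]⟩, mul_zero, mul_zero]

theorem norm_average_sub_fourierCoeff_zero_le {s : ℝ} (hs : 1 / 2 < s) {f : C(AddCircle T, ℂ)}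
    (hf : SobolevSummable s (fourierCoeff f)) (hu : IsOfFinAddOrder u) (x : AddCircle T) :
    ‖(addOrderOf u : ℂ)⁻¹ * ∑ l ∈ range (addOrderOf u), f (x + l • u) - fourierCoeff f 0‖ ≤
      aliasingConst s * (addOrderOf u : ℝ) ^ (-s) * sobolevSeqNorm s (fourierCoeff f) := by
  obtain ⟨hsum, htsum⟩ := hf.summable_and_tsum_norm_mul_natCast_le hs hu.addOrderOf_pos.ne'
  have herror := (hasSum_aliased_fourierCoeff (hf.summable hs) hu x).sub
    (hasSum_ite_eq (0 : ℤ) (fourierCoeff f 0))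
  refine (herror.norm_le_of_bounded hsum.hasSum fun m => ?_).trans htsum
  split_ifs with hm
  · simp [hm]
  · rw [sub_zero, norm_mul, fourier_apply, Circle.norm_coe, mul_one]

end EquispacedAverages

section PeriodicFunctions

variable {T : ℝ}

theorem periodic_deriv {F : Type*} [NormedAddCommGroup F] [NormedSpace ℝ F] {g : ℝ → F}
    (hg : Function.Periodic g T) : Function.Periodic (deriv g) T := fun x => by
  rw [← deriv_comp_add_const, funext hg]

theorem continuous_periodic_lift {X : Type*} [TopologicalSpace X] {g : ℝ → X}
    (hg : Function.Periodic g T) (hc : Continuous g) :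
    Continuous (hg.lift : AddCircle T → X) :=
  continuous_coinduced_dom.mpr hc

variable [hT : Fact (0 < T)] {g : ℝ → ℂ}

theorem fourierCoeff_lift_eq_fourierCoeffOn (hg : Function.Periodic g T) (a : ℝ) (n : ℤ) :
    fourierCoeff hg.lift n = fourierCoeffOn (lt_add_of_pos_right a hT.out) g n := by
  rw [fourierCoeffOn_eq_integral, fourierCoeff_eq_intervalIntegral _ n a, add_sub_cancel_left a T]
  rfl

theorem fourierCoeff_lift_deriv (hg : Function.Periodic g T) (hd : ContDiff ℝ 1 g) (n : ℤ) :
    fourierCoeff (periodic_deriv hg).lift n =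
      2 * Real.pi * Complex.I * n / T * fourierCoeff hg.lift n := by
  have hderiv (x : ℝ) : HasDerivAt g (deriv g x) x := (hd.differentiable one_ne_zero x).hasDerivAt
  have hint : IntervalIntegrable (deriv g) MeasureTheory.volume 0 (0 + T) :=
    (hd.continuous_deriv le_rfl).intervalIntegrable _ _
  have hT0 : (T : ℂ) ≠ 0 := by exact_mod_cast hT.out.ne'
  rcases eq_or_ne n 0 with rfl | hn
  · have hint0 := intervalIntegral.integral_eq_sub_of_hasDerivAt (fun x _ => hderiv x) hint
    rw [fourierCoeff_eq_intervalIntegral _ 0 0]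
    simp only [neg_zero, fourier_zero, one_smul, Function.Periodic.lift_coe, hint0, hg 0, sub_self,
      smul_zero, Int.cast_zero, mul_zero, zero_div, zero_mul]
  · rw [fourierCoeff_lift_eq_fourierCoeffOn hg 0, fourierCoeff_lift_eq_fourierCoeffOn _ 0,
      fourierCoeffOn_of_hasDerivAt _ hn (fun x _ => hderiv x) hint, hg 0]
    have hn' : (n : ℂ) ≠ 0 := by exact_mod_cast hn
    have hpi : (Real.pi : ℂ) ≠ 0 := by exact_mod_cast Real.pi_ne_zero
    push_cast
    field_simp
    ring

theorem summable_sq_norm_fourierCoeff (f : C(AddCircle T, ℂ)) :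
    Summable fun k : ℤ => ‖fourierCoeff f k‖ ^ 2 := by
  simpa only [fourierCoeff_toLp] using
    (hasSum_sq_fourierCoeff (ContinuousMap.toLp 2 AddCircle.haarAddCircle ℂ f)).summable

theorem sobolevSummable_fourierCoeff_lift {n : ℕ} (hg : Function.Periodic g T)
    (hd : ContDiff ℝ n g) : SobolevSummable n (fourierCoeff hg.lift) := by
  simp only [SobolevSummable, Real.rpow_natCast]
  induction n generalizing g with
  | zero => simpa using summable_sq_norm_fourierCoeff ⟨_, continuous_periodic_lift hg hd.continuous⟩
  | succ n ih =>
    have hd' : ContDiff ℝ (n + 1) g := by exact_mod_cast hd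
    have h := (ih hg (hd.of_le (by exact_mod_cast n.le_succ))).add <|
      (ih (periodic_deriv hg) (contDiff_succ_iff_deriv.mp hd').2.2).mul_left
        ((T / (2 * Real.pi)) ^ 2)
    refine h.congr fun k => ?_
    rw [fourierCoeff_lift_deriv hg (hd.of_le (by exact_mod_cast Nat.succ_le_succ n.zero_le))]
    have hT0 := hT.out.ne'
    have hpi := Real.pi_ne_zero
    simp only [norm_mul, norm_div, Complex.norm_ofNat, Complex.norm_real, Complex.norm_I,
      Complex.norm_intCast, Real.norm_eq_abs, mul_pow, div_pow, sq_abs]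
    field_simp
    ring

end PeriodicFunctions

section TwoPiPeriodic

local instance : Fact (0 < 2 * Real.pi) := ⟨Real.two_pi_pos⟩

variable {g : ℝ → ℂ}

theorem fourierCoeff_lift_eq_fourierCoeffP (hg : Function.Periodic g (2 * Real.pi)) :
    fourierCoeff hg.lift = fourierCoeffP g := by
  ext k
  rw [fourierCoeff_eq_intervalIntegral _ k (-Real.pi), fourierCoeffP,
    show -Real.pi + 2 * Real.pi = Real.pi by ring, Complex.real_smul, one_div]
  congr 1
  refine intervalIntegral.integral_congr fun x _ => ?_
  have hpi : (Real.pi : ℂ) ≠ 0 := by exact_mod_cast Real.pi_ne_zero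
  simp only [Function.Periodic.lift_coe, fourier_coe_apply, smul_eq_mul, mul_comm (g x)]
  congr 2
  push_cast
  field_simp

theorem two_pi_mul_fourierCoeffP_zero (g : ℝ → ℂ) :
    2 * (Real.pi : ℂ) * fourierCoeffP g 0 = ∫ α in (-Real.pi)..Real.pi, g α := by
  have hpi : (Real.pi : ℂ) ≠ 0 := by exact_mod_cast Real.pi_ne_zero
  simp only [fourierCoeffP, Int.cast_zero, mul_zero, zero_mul, neg_zero, Complex.exp_zero, mul_one]
  push_cast
  field_simp

theorem filter_odd_sub_idxs (M : ℕ) (i : ℤ) :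
    (idxs (2 * M)).filter (fun j => Odd (j - i)) =
      (range M).image fun l : ℕ => (M + i) % 2 - M + 1 + 2 * (l : ℤ) := by
  ext j
  simp only [idxs, mem_filter, mem_Icc, mem_image, mem_range, Int.odd_iff]
  constructor
  · intro hj
    exact ⟨((j + M - 1) / 2).toNat, by omega, by omega⟩
  · rintro ⟨l, hl, rfl⟩
    omega

theorem hgrid_two_mul (M : ℕ) : hgrid (2 * M) = Real.pi / M := by
  rw [hgrid]
  push_cast
  exact mul_div_mul_left _ _ two_ne_zero

theorem coe_gridPt_add_two_mul (M : ℕ) (j : ℤ) (l : ℕ) :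
    (gridPt (2 * M) (j + 2 * l) : AddCircle (2 * Real.pi)) =
      gridPt (2 * M) j + l • ((2 * Real.pi / M : ℝ) : AddCircle (2 * Real.pi)) := by
  rw [← AddCircle.coe_nsmul, ← AddCircle.coe_add, gridPt, gridPt, hgrid_two_mul, nsmul_eq_mul]
  congr 1
  push_cast
  ring

theorem sum_alternate_gridPt_eq {F : Type*} [AddCommMonoid F] {g : ℝ → F}
    (hg : Function.Periodic g (2 * Real.pi)) (M : ℕ) (i : ℤ) :
    ∃ x : AddCircle (2 * Real.pi),
      ∑ j ∈ (idxs (2 * M)).filter (fun j => Odd (j - i)), g (gridPt (2 * M) j) =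
        ∑ l ∈ range M, hg.lift (x + l • ((2 * Real.pi / M : ℝ) : AddCircle (2 * Real.pi))) := by
  refine ⟨gridPt (2 * M) ((M + i) % 2 - M + 1), ?_⟩
  rw [filter_odd_sub_idxs, sum_image fun l _ l' _ h => by simpa using h]
  simp only [← coe_gridPt_add_two_mul, Function.Periodic.lift_coe]

theorem sobolevSummable_fourierCoeffP {n : ℕ} (hg : Function.Periodic g (2 * Real.pi))
    (hd : ContDiff ℝ n g) : SobolevSummable n (fourierCoeffP g) :=
  fourierCoeff_lift_eq_fourierCoeffP hg ▸ sobolevSummable_fourierCoeff_lift hg hd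

theorem norm_alternate_trapezoid_sub_integral_le {s : ℝ} (hs : 1 / 2 < s)
    (hg : Function.Periodic g (2 * Real.pi)) (hc : Continuous g)
    (hsob : SobolevSummable s (fourierCoeffP g)) {M : ℕ} (hM : 0 < M) (i : ℤ) :
    ‖2 * (hgrid (2 * M) : ℂ) *
        (∑ j ∈ (idxs (2 * M)).filter (fun j => Odd (j - i)), g (gridPt (2 * M) j)) -
        ∫ α in (-Real.pi)..Real.pi, g α‖ ≤
      2 * Real.pi *
        (aliasingConst s * (M : ℝ) ^ (-s) * sobolevSeqNorm s (fourierCoeffP g)) := by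
  obtain ⟨x, hx⟩ := sum_alternate_gridPt_eq hg M i
  have horder := AddCircle.addOrderOf_period_div (p := 2 * Real.pi) hM
  have hcoeff := fourierCoeff_lift_eq_fourierCoeffP hg
  have haverage := norm_average_sub_fourierCoeff_zero_le hs
    (f := ⟨hg.lift, continuous_periodic_lift hg hc⟩) (by simpa only [ContinuousMap.coe_mk, hcoeff])
    (addOrderOf_pos_iff.mp (horder ▸ hM)) x
  simp only [horder, ContinuousMap.coe_mk, hcoeff, ← hx] at haverage
  rw [← two_pi_mul_fourierCoeffP_zero, hgrid_two_mul]
  calc _ = ‖((2 * Real.pi : ℝ) : ℂ) * ((M : ℂ)⁻¹ *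
        ∑ j ∈ (idxs (2 * M)).filter (fun j => Odd (j - i)), g (gridPt (2 * M) j) -
          fourierCoeffP g 0)‖ := by
        congr 1
        push_cast
        ring
    _ ≤ _ := by
        rw [norm_mul, Complex.norm_real, Real.norm_of_nonneg Real.two_pi_pos.le]
        gcongr

theorem alternate_point_trapezoid_accuracy_general {s : ℝ} (hs : 1 / 2 < s) :
    ∃ c : ℝ, 0 < c ∧ ∀ g : ℝ → ℂ, Function.Periodic g (2 * Real.pi) → Continuous g →
      SobolevSummable s (fourierCoeffP g) → ∀ N : ℤ, 2 ≤ N → Even N → ∀ i : ℤ,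
        ‖2 * (hgrid N : ℂ) *
            (∑ j ∈ (idxs N).filter (fun j => Odd (j - i)), g (gridPt N j)) -
            ∫ α in (-Real.pi)..Real.pi, g α‖ ≤
          c * hgrid N ^ s * sobolevSeqNorm s (fourierCoeffP g) := by
  refine ⟨2 * Real.pi * aliasingConst s / Real.pi ^ s,
    div_pos (mul_pos Real.two_pi_pos (aliasingConst_pos hs)) (Real.rpow_pos_of_pos Real.pi_pos s),
    fun g hg hc hsob N hN hEven i => ?_⟩
  obtain ⟨M, hM, rfl⟩ : ∃ M : ℕ, 0 < M ∧ N = 2 * M := by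
    obtain ⟨r, hr⟩ := hEven
    exact ⟨r.toNat, by omega, by omega⟩
  have hpi : Real.pi ^ s ≠ 0 := (Real.rpow_pos_of_pos Real.pi_pos s).ne'
  refine (norm_alternate_trapezoid_sub_integral_le hs hg hc hsob hM i).trans_eq ?_
  rw [hgrid_two_mul, Real.div_rpow Real.pi_nonneg M.cast_nonneg, Real.rpow_neg M.cast_nonneg]
  field_simp

end TwoPiPeriodic

/-- spectral accuracy of the alternate-point trapezoidal rule for
smooth periodic functions. -/
theorem alternate_point_trapezoid_accuracy (s : ℕ) (hs : 1 ≤ s) :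
    ∃ c : ℝ, 0 < c ∧ ∀ g : ℝ → ℂ, Function.Periodic g (2 * Real.pi) →
      ContDiff ℝ (s : ℕ) g →
      ∀ N : ℤ, 2 ≤ N → Even N → ∀ i ∈ idxs N,
        norm (2 * (hgrid N : ℂ) *
            (∑ j ∈ (idxs N).filter (fun j => Odd (j - i)), g (gridPt N j)) -
            ∫ α in (-Real.pi)..Real.pi, g α) ≤
          c * hgrid N ^ s * sobolevNorm s g := by
  obtain ⟨c, hc, hbound⟩ := alternate_point_trapezoid_accuracy_general
    (s := s) (one_half_lt_one.trans_le (by exact_mod_cast hs))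
  refine ⟨c, hc, fun g hg hd N hN hEven i _ => ?_⟩
  simpa only [Real.rpow_natCast, sobolevNorm_eq_sobolevSeqNorm] using
    hbound g hg hd.continuous (sobolevSummable_fourierCoeffP hg hd) N hN hEven i

end
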